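/- Let γ ∈ (0, 2s). Then there exists a function v ∈ C^∞(ℝⁿ) and a constant C > 0 such that: v(0) = 0; 0 ≤ v(x) ≤ |x|^γ for every x ∈ ℝⁿ; v(x) = |x|^γ whenever |x| ≥ 1; and sup_{x ∈ ℝⁿ} ℐv(x) ≤ C. -/

import Mathlib

open MeasureTheory

/-- The anisotropic integro-differential operator
`ℐv(x) = ∫_{S^{n-1} × ℝ} (v(x + rϑ) + v(x − rϑ) − 2v(x)) dμ(ϑ) dr / |r|^{1+2s}`. -/
noncomputable def opI (n : ℕ) (s : ℝ)
    (μ : Measure (Metric.sphere (0 : EuclideanSpace ℝ (Fin n)) 1))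
    (v : EuclideanSpace ℝ (Fin n) → ℝ) (x : EuclideanSpace ℝ (Fin n)) : ℝ :=
  ∫ p : Metric.sphere (0 : EuclideanSpace ℝ (Fin n)) 1 × ℝ,
    (v (x + p.2 • (p.1 : EuclideanSpace ℝ (Fin n))) +
      v (x - p.2 • (p.1 : EuclideanSpace ℝ (Fin n))) - 2 * v x) / |p.2| ^ (1 + 2 * s)
    ∂(μ.prod volume)

/-!
Only the second difference `v (x + h) + v (x - h) - 2 * v x` matters: an upper bound by
`K * min (‖h‖ ^ 2) (‖h‖ ^ γ)` with `K` independent of `x` bounds `ℐ v`, because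
`min (r ^ 2) (r ^ γ) / r ^ (1 + 2 * s)` is integrable on `(0, ∞)` when `γ < 2 * s < 2`.

Take `v` to be `‖x‖ ^ γ` cut off near the origin. Where `1 ≤ ‖x‖`, the function `‖·‖ ^ γ` touches
`v` from above at `x`, and the parallelogram law with the concavity of `t ↦ t ^ (γ / 2)` bounds its
second difference by `2 * ((‖x‖ ^ 2 + ‖h‖ ^ 2) ^ (γ / 2) - ‖x‖ ^ γ)`. Where `‖x‖ ≤ 1`, smoothness
and compactness control small `h`, and the growth of `v` controls large `h`. The latter argument, on
larger balls, also bounds the second difference from below, though not uniformly in `x`, so the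
integral defining `ℐ v x` converges absolutely and is not a junk value.
-/

section SecondDifference

variable {E : Type*} [NormedAddCommGroup E]

/-- The symmetric second difference of `f` at `x` with increment `h`, the numerator of the integrand
of `opI`. -/
def secondDiff (f : E → ℝ) (x h : E) : ℝ :=
  f (x + h) + f (x - h) - 2 * f x

lemma secondDiff_le_of_le_of_eq {f g : E → ℝ} (hfg : ∀ y, f y ≤ g y) {x : E} (hx : f x = g x)
    (h : E) : secondDiff f x h ≤ secondDiff g x h := by
  unfold secondDiff
  linarith [hfg (x + h), hfg (x - h)]

lemma abs_secondDiff_le_of_abs_le_rpow {f : E → ℝ} {γ R : ℝ} (hγ : 0 ≤ γ)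
    (hf : ∀ y, |f y| ≤ ‖y‖ ^ γ) {x h : E} (hx : ‖x‖ ≤ R) (hh : 1 ≤ ‖h‖) :
    |secondDiff f x h| ≤ 4 * (R + 1) ^ γ * ‖h‖ ^ γ := by
  have hR : 0 ≤ R := (norm_nonneg x).trans hx
  have hbound {y : E} (hy : ‖y‖ ≤ R + ‖h‖) : |f y| ≤ (R + 1) ^ γ * ‖h‖ ^ γ :=
    calc |f y| ≤ ‖y‖ ^ γ := hf y
      _ ≤ ((R + 1) * ‖h‖) ^ γ := by gcongr; nlinarith
      _ = (R + 1) ^ γ * ‖h‖ ^ γ := Real.mul_rpow (by positivity) (norm_nonneg h)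
  have hadd := abs_le.1 (hbound ((norm_add_le x h).trans (by gcongr)))
  have hsub := abs_le.1 (hbound ((norm_sub_le x h).trans (by gcongr)))
  have hmid := abs_le.1 (hbound (y := x) (by linarith))
  rw [secondDiff, abs_le]
  constructor <;> linarith

variable [NormedSpace ℝ E]

lemma abs_secondDiff_le_of_lipschitzOnWith_fderiv {f : E → ℝ} {s : Set E} (hs : Convex ℝ s)
    (hf : ∀ y ∈ s, DifferentiableAt ℝ f y) {L : NNReal} (hL : LipschitzOnWith L (fderiv ℝ f) s)
    {x h : E} (hx : x ∈ s) (hadd : x + h ∈ s) (hsub : x - h ∈ s) :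
    |secondDiff f x h| ≤ L * ‖h‖ ^ 2 := by
  have hderiv : ∀ y ∈ s ∩ (· + h) ⁻¹' s, HasFDerivWithinAt (fun z => f (z + h) - f z)
      (fderiv ℝ f (y + h) - fderiv ℝ f y) (s ∩ (· + h) ⁻¹' s) y := fun y hy =>
    (((hasFDerivAt_comp_add_right h).2 (hf (y + h) hy.2).hasFDerivAt).sub
      (hf y hy.1).hasFDerivAt).hasFDerivWithinAt
  have hbound : ∀ y ∈ s ∩ (· + h) ⁻¹' s, ‖fderiv ℝ f (y + h) - fderiv ℝ f y‖ ≤ L * ‖h‖ :=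
    fun y hy => by simpa using hL.norm_sub_le hy.2 hy.1
  have hmean :=
    (hs.inter (hs.translate_preimage_left h)).norm_image_sub_le_of_norm_hasFDerivWithin_le
      hderiv hbound (x := x - h) (y := x) ⟨hsub, by simpa using hx⟩ ⟨hx, hadd⟩
  calc |secondDiff f x h| = ‖f (x + h) - f x - (f (x - h + h) - f (x - h))‖ := by
        rw [secondDiff, sub_add_cancel, Real.norm_eq_abs]; ring_nf
    _ ≤ L * ‖h‖ * ‖x - (x - h)‖ := hmean
    _ = L * ‖h‖ ^ 2 := by rw [sub_sub_cancel]; ring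

lemma exists_abs_secondDiff_le_sq [ProperSpace E] {f : E → ℝ} (hf : ContDiff ℝ 2 f)
    (R : ℝ) : ∃ K : ℝ, ∀ x h : E, ‖x‖ ≤ R → ‖h‖ ≤ 1 → |secondDiff f x h| ≤ K * ‖h‖ ^ 2 := by
  have hlip : LocallyLipschitz (fderiv ℝ f) :=
    (hf.fderiv_right (m := 1) (by norm_num)).locallyLipschitz
  obtain ⟨L, hL⟩ := hlip.locallyLipschitzOn.exists_lipschitzOnWith_of_compact
    (isCompact_closedBall (0 : E) (R + 1))
  refine ⟨L, fun x h hx hh => abs_secondDiff_le_of_lipschitzOnWith_fderiv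
    (convex_closedBall (0 : E) (R + 1)) (fun y _ => hf.differentiable (by norm_num) y) hL
    ?_ ?_ ?_⟩ <;>
    rw [mem_closedBall_zero_iff]
  · linarith
  · exact (norm_add_le x h).trans (by gcongr)
  · exact (norm_sub_le x h).trans (by gcongr)

end SecondDifference

section PowerInequalities

lemma min_sq_rpow_of_le_one {t γ : ℝ} (h0 : 0 ≤ γ) (h2 : γ ≤ 2) (ht0 : 0 ≤ t) (ht1 : t ≤ 1) :
    min (t ^ 2) (t ^ γ) = t ^ 2 :=
  min_eq_left <| by simpa using Real.rpow_le_rpow_of_exponent_ge' ht0 ht1 h0 h2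

lemma min_sq_rpow_of_one_le {t γ : ℝ} (h2 : γ ≤ 2) (ht : 1 ≤ t) :
    min (t ^ 2) (t ^ γ) = t ^ γ :=
  min_eq_right <| by simpa using Real.rpow_le_rpow_of_exponent_le ht h2

lemma sq_rpow_half {t : ℝ} (ht : 0 ≤ t) (γ : ℝ) : (t ^ 2) ^ (γ / 2) = t ^ γ := by
  rw [← Real.rpow_natCast_mul ht, Nat.cast_ofNat, mul_div_cancel₀ γ two_ne_zero]

lemma add_rpow_le_rpow_add {p t u : ℝ} (hp : p ≤ 1) (ht : 1 ≤ t) (hu : 0 ≤ u) :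
    (t + u) ^ p ≤ t ^ p + u := by
  have ht0 : 0 < t := by linarith
  have hdecr : (t + u) ^ (p - 1) ≤ t ^ (p - 1) :=
    Real.rpow_le_rpow_of_nonpos ht0 (by linarith) (by linarith)
  have hone : (t + u) ^ (p - 1) ≤ 1 :=
    Real.rpow_le_one_of_one_le_of_nonpos (by linarith) (by linarith)
  calc (t + u) ^ p = t * (t + u) ^ (p - 1) + u * (t + u) ^ (p - 1) := by
        rw [← add_mul, mul_comm, ← Real.rpow_add_one (by positivity), sub_add_cancel]
    _ ≤ t * t ^ (p - 1) + u * 1 := by gcongr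
    _ = t ^ p + u := by rw [mul_one, mul_comm, ← Real.rpow_add_one ht0.ne', sub_add_cancel]

end PowerInequalities

lemma exists_abs_secondDiff_le_min {E : Type*} [NormedAddCommGroup E] [NormedSpace ℝ E]
    [ProperSpace E] {f : E → ℝ} (hf : ContDiff ℝ 2 f) {γ : ℝ} (h0 : 0 ≤ γ) (h2 : γ ≤ 2)
    (hfγ : ∀ y, |f y| ≤ ‖y‖ ^ γ) (R : ℝ) :
    ∃ K : ℝ, ∀ x h : E, ‖x‖ ≤ R → |secondDiff f x h| ≤ K * min (‖h‖ ^ 2) (‖h‖ ^ γ) := by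
  obtain ⟨K, hK⟩ := exists_abs_secondDiff_le_sq hf R
  refine ⟨max K (4 * (R + 1) ^ γ), fun x h hx => ?_⟩
  rcases le_total ‖h‖ 1 with hh | hh
  · rw [min_sq_rpow_of_le_one h0 h2 (norm_nonneg h) hh]
    exact (hK x h hx hh).trans (by gcongr; exact le_max_left _ _)
  · rw [min_sq_rpow_of_one_le h2 hh]
    exact (abs_secondDiff_le_of_abs_le_rpow h0 hfγ hx hh).trans (by gcongr; exact le_max_right _ _)

section NormPower

variable {E : Type*} [NormedAddCommGroup E] [InnerProductSpace ℝ E] {γ : ℝ}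

lemma secondDiff_norm_rpow_le (h0 : 0 ≤ γ) (h2 : γ ≤ 2) (x h : E) :
    secondDiff (‖·‖ ^ γ) x h ≤ 2 * ((‖x‖ ^ 2 + ‖h‖ ^ 2) ^ (γ / 2) - ‖x‖ ^ γ) := by
  have hconcave := (Real.concaveOn_rpow (p := γ / 2) (by linarith) (by linarith)).2
    (Set.mem_Ici.2 (sq_nonneg ‖x + h‖)) (Set.mem_Ici.2 (sq_nonneg ‖x - h‖))
    one_half_pos.le one_half_pos.le (add_halves 1)
  have hparallelogram : 1 / 2 * ‖x + h‖ ^ 2 + 1 / 2 * ‖x - h‖ ^ 2 = ‖x‖ ^ 2 + ‖h‖ ^ 2 := by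
    linarith [parallelogram_law_with_norm ℝ x h]
  simp only [smul_eq_mul, hparallelogram, sq_rpow_half (norm_nonneg _)] at hconcave
  simp only [secondDiff]
  linarith

lemma secondDiff_norm_rpow_le_min (h0 : 0 ≤ γ) (h2 : γ ≤ 2) {x : E} (hx : 1 ≤ ‖x‖) (h : E) :
    secondDiff (‖·‖ ^ γ) x h ≤ 2 * min (‖h‖ ^ 2) (‖h‖ ^ γ) := by
  have hsq : (‖x‖ ^ 2 + ‖h‖ ^ 2) ^ (γ / 2) ≤ (‖x‖ ^ 2) ^ (γ / 2) + ‖h‖ ^ 2 :=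
    add_rpow_le_rpow_add (by linarith) (one_le_pow₀ hx) (sq_nonneg _)
  have hrpow : (‖x‖ ^ 2 + ‖h‖ ^ 2) ^ (γ / 2) ≤ (‖x‖ ^ 2) ^ (γ / 2) + (‖h‖ ^ 2) ^ (γ / 2) :=
    Real.rpow_add_le_add_rpow (sq_nonneg _) (sq_nonneg _) (by linarith) (by linarith)
  rw [sq_rpow_half (norm_nonneg _)] at hsq
  rw [sq_rpow_half (norm_nonneg _), sq_rpow_half (norm_nonneg _)] at hrpow
  refine (secondDiff_norm_rpow_le h0 h2 x h).trans (mul_le_mul_of_nonneg_left ?_ zero_le_two)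
  exact le_min (by linarith) (by linarith)

end NormPower

section Barrier

variable {E : Type*} [NormedAddCommGroup E]

/-- The function `‖x‖ ^ γ`, smoothly cut off to zero on the ball of radius `1 / √2`. The cutoff is
a function of `‖x‖ ^ 2`, which is smooth at the origin. -/
noncomputable def barrier (γ : ℝ) (x : E) : ℝ :=
  Real.smoothTransition (2 * ‖x‖ ^ 2 - 1) * ‖x‖ ^ γ

lemma barrier_eq_zero (γ : ℝ) {x : E} (hx : ‖x‖ ≤ 1 / 2) : barrier γ x = 0 := by
  rw [barrier, Real.smoothTransition.zero_of_nonpos (by nlinarith [norm_nonneg x]), zero_mul]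

lemma barrier_nonneg (γ : ℝ) (x : E) : 0 ≤ barrier γ x :=
  mul_nonneg (Real.smoothTransition.nonneg _) (by positivity)

lemma barrier_le (γ : ℝ) (x : E) : barrier γ x ≤ ‖x‖ ^ γ :=
  mul_le_of_le_one_left (by positivity) (Real.smoothTransition.le_one _)

lemma barrier_eq_of_one_le (γ : ℝ) {x : E} (hx : 1 ≤ ‖x‖) : barrier γ x = ‖x‖ ^ γ := by
  rw [barrier, Real.smoothTransition.one_of_one_le (by nlinarith), one_mul]

variable [InnerProductSpace ℝ E]

lemma contDiff_barrier (γ : ℝ) : ContDiff ℝ (⊤ : ℕ∞) (barrier γ : E → ℝ) := by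
  refine contDiff_iff_contDiffAt.2 fun x => ?_
  rcases eq_or_ne x 0 with rfl | hx
  · have hzero : (barrier γ : E → ℝ) =ᶠ[nhds 0] fun _ => 0 := by
      filter_upwards [Metric.closedBall_mem_nhds (0 : E) one_half_pos] with y hy
      exact barrier_eq_zero γ (mem_closedBall_zero_iff.1 hy)
    exact contDiffAt_const.congr_of_eventuallyEq hzero
  · have hcutoff : ContDiff ℝ (⊤ : ℕ∞) fun y : E => Real.smoothTransition (2 * ‖y‖ ^ 2 - 1) :=
      Real.smoothTransition.contDiff.comp
        ((contDiff_const.mul (contDiff_norm_sq ℝ)).sub contDiff_const)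
    exact hcutoff.contDiffAt.mul ((contDiffAt_norm ℝ hx).rpow_const_of_ne (norm_ne_zero_iff.2 hx))

variable [ProperSpace E] {γ : ℝ}

lemma exists_abs_secondDiff_barrier_le (h0 : 0 ≤ γ) (h2 : γ ≤ 2) (R : ℝ) :
    ∃ K : ℝ, ∀ x h : E, ‖x‖ ≤ R →
      |secondDiff (barrier γ) x h| ≤ K * min (‖h‖ ^ 2) (‖h‖ ^ γ) :=
  exists_abs_secondDiff_le_min ((contDiff_barrier γ).of_le (WithTop.coe_le_coe.2 le_top)) h0 h2
    (fun y => (abs_of_nonneg (barrier_nonneg γ y)).trans_le (barrier_le γ y)) R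

variable (E) in
lemma exists_secondDiff_barrier_le (h0 : 0 ≤ γ) (h2 : γ ≤ 2) :
    ∃ K : ℝ, 0 ≤ K ∧ ∀ x h : E,
      secondDiff (barrier γ) x h ≤ K * min (‖h‖ ^ 2) (‖h‖ ^ γ) := by
  obtain ⟨K, hK⟩ := exists_abs_secondDiff_barrier_le (E := E) h0 h2 1
  refine ⟨max K 2, by positivity, fun x h => ?_⟩
  rcases le_total ‖x‖ 1 with hx | hx
  · exact (le_of_abs_le (hK x h hx)).trans (by gcongr; exact le_max_left _ _)
  · calc secondDiff (barrier γ) x h ≤ secondDiff (‖·‖ ^ γ) x h :=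
          secondDiff_le_of_le_of_eq (barrier_le γ) (barrier_eq_of_one_le γ hx) h
      _ ≤ 2 * min (‖h‖ ^ 2) (‖h‖ ^ γ) := secondDiff_norm_rpow_le_min h0 h2 hx h
      _ ≤ max K 2 * min (‖h‖ ^ 2) (‖h‖ ^ γ) := by gcongr; exact le_max_right _ _

end Barrier

section Operator

variable {n : ℕ} {s γ : ℝ}

lemma integrable_min_sq_rpow_div (hs : s < 1) (hγ : γ < 2 * s) :
    Integrable fun r : ℝ => min (|r| ^ 2) (|r| ^ γ) / |r| ^ (1 + 2 * s) := by
  have hmeas : Measurable fun r : ℝ => min (r ^ 2) (r ^ γ) / r ^ (1 + 2 * s) := by fun_prop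
  have hnear : IntegrableOn (fun r : ℝ => min (r ^ 2) (r ^ γ) / r ^ (1 + 2 * s)) (Set.Ioc 0 1) := by
    have hdom : IntegrableOn (fun r : ℝ => r ^ (1 - 2 * s)) (Set.Ioc 0 1) :=
      (intervalIntegrable_iff_integrableOn_Ioc_of_le zero_le_one).1
        (intervalIntegral.intervalIntegrable_rpow' (by linarith))
    refine hdom.mono' hmeas.aestronglyMeasurable (ae_restrict_of_forall_mem measurableSet_Ioc ?_)
    intro r ⟨hr, _⟩
    rw [Real.norm_of_nonneg (by positivity), div_le_iff₀ (by positivity), ← Real.rpow_add hr]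
    calc min (r ^ 2) (r ^ γ) ≤ r ^ 2 := min_le_left _ _
      _ = r ^ (1 - 2 * s + (1 + 2 * s)) := by rw [← Real.rpow_natCast]; norm_num
  have hfar : IntegrableOn (fun r : ℝ => min (r ^ 2) (r ^ γ) / r ^ (1 + 2 * s)) (Set.Ioi 1) := by
    have hdom : IntegrableOn (fun r : ℝ => r ^ (γ - (1 + 2 * s))) (Set.Ioi 1) :=
      integrableOn_Ioi_rpow_of_lt (by linarith) one_pos
    refine hdom.mono' hmeas.aestronglyMeasurable (ae_restrict_of_forall_mem measurableSet_Ioi ?_)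
    intro r hr
    have hr0 : 0 < r := one_pos.trans hr
    rw [Real.norm_of_nonneg (by positivity), Real.rpow_sub hr0]
    gcongr
    exact min_le_right _ _
  have hIoi := hnear.union hfar
  rw [Set.Ioc_union_Ioi_eq_Ioi zero_le_one] at hIoi
  simpa only [Real.norm_eq_abs] using (integrable_fun_norm_addHaar (E := ℝ) volume
    (f := fun r : ℝ => min (r ^ 2) (r ^ γ) / r ^ (1 + 2 * s))).2 (by simpa using hIoi)

variable {μ : Measure (Metric.sphere (0 : EuclideanSpace ℝ (Fin n)) 1)} [IsFiniteMeasure μ]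
  {v : EuclideanSpace ℝ (Fin n) → ℝ} {x : EuclideanSpace ℝ (Fin n)}

lemma integrable_secondDiff_div (hs : s < 1) (hγ : γ < 2 * s) (hv : Measurable v) {K : ℝ}
    (hK : ∀ h, |secondDiff v x h| ≤ K * min (‖h‖ ^ 2) (‖h‖ ^ γ)) :
    Integrable (fun p : Metric.sphere (0 : EuclideanSpace ℝ (Fin n)) 1 × ℝ =>
      secondDiff v x (p.2 • (p.1 : EuclideanSpace ℝ (Fin n))) / |p.2| ^ (1 + 2 * s))
      (μ.prod volume) := by
  have hmeas : Measurable fun p : Metric.sphere (0 : EuclideanSpace ℝ (Fin n)) 1 × ℝ =>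
      secondDiff v x (p.2 • (p.1 : EuclideanSpace ℝ (Fin n))) / |p.2| ^ (1 + 2 * s) := by
    unfold secondDiff
    fun_prop
  refine (((integrable_min_sq_rpow_div hs hγ).comp_snd μ).const_mul K).mono'
    hmeas.aestronglyMeasurable (.of_forall fun p => ?_)
  rw [norm_div, Real.norm_of_nonneg (by positivity : 0 ≤ |p.2| ^ (1 + 2 * s)), ← mul_div_assoc]
  gcongr
  simpa [norm_smul] using hK (p.2 • (p.1 : EuclideanSpace ℝ (Fin n)))

lemma opI_le_of_secondDiff_le (hs : s < 1) (hγ : γ < 2 * s) (hv : Measurable v)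
    (hx : ∃ L : ℝ, ∀ h, |secondDiff v x h| ≤ L * min (‖h‖ ^ 2) (‖h‖ ^ γ)) {K : ℝ}
    (hK : ∀ h, secondDiff v x h ≤ K * min (‖h‖ ^ 2) (‖h‖ ^ γ)) :
    opI n s μ v x ≤
      K * μ.real Set.univ * ∫ r : ℝ, min (|r| ^ 2) (|r| ^ γ) / |r| ^ (1 + 2 * s) := by
  obtain ⟨L, hL⟩ := hx
  calc opI n s μ v x
      = ∫ p : Metric.sphere (0 : EuclideanSpace ℝ (Fin n)) 1 × ℝ,
          secondDiff v x (p.2 • (p.1 : EuclideanSpace ℝ (Fin n))) / |p.2| ^ (1 + 2 * s)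
          ∂(μ.prod volume) := rfl
    _ ≤ ∫ p : Metric.sphere (0 : EuclideanSpace ℝ (Fin n)) 1 × ℝ,
          K * (min (|p.2| ^ 2) (|p.2| ^ γ) / |p.2| ^ (1 + 2 * s)) ∂(μ.prod volume) := by
        refine integral_mono (integrable_secondDiff_div hs hγ hv hL)
          (((integrable_min_sq_rpow_div hs hγ).comp_snd μ).const_mul K) fun p => ?_
        simp only [← mul_div_assoc]
        gcongr
        simpa [norm_smul] using hK (p.2 • (p.1 : EuclideanSpace ℝ (Fin n)))
    _ = K * μ.real Set.univ * ∫ r : ℝ, min (|r| ^ 2) (|r| ^ γ) / |r| ^ (1 + 2 * s) := by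
        rw [integral_const_mul, integral_fun_snd
          (fun r : ℝ => min (|r| ^ 2) (|r| ^ γ) / |r| ^ (1 + 2 * s)), smul_eq_mul, mul_assoc]

end Operator

/-- Barrier construction: for `γ ∈ (0,2s)` there is a smooth function `v` with `v(0) = 0`,
`0 ≤ v ≤ |·|^γ`, `v = |·|^γ` outside `B₁`, and `ℐ v` bounded above on `ℝⁿ`. -/
theorem exists_barrier
    (n : ℕ) (hn : 1 ≤ n) (s : ℝ) (hs : s ∈ Set.Ioo (0 : ℝ) 1)
    (μ : Measure (Metric.sphere (0 : EuclideanSpace ℝ (Fin n)) 1)) [IsFiniteMeasure μ]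
    (Λ : ℝ) (hΛ : 0 < Λ) (hμΛ : μ Set.univ ≤ ENNReal.ofReal Λ)
    (γ : ℝ) (hγ : γ ∈ Set.Ioo (0 : ℝ) (2 * s)) :
    ∃ (v : EuclideanSpace ℝ (Fin n) → ℝ) (C : ℝ),
      ContDiff ℝ (⊤ : ℕ∞) v ∧ 0 < C ∧
      v 0 = 0 ∧
      (∀ x, 0 ≤ v x ∧ v x ≤ ‖x‖ ^ γ) ∧
      (∀ x : EuclideanSpace ℝ (Fin n), 1 ≤ ‖x‖ → v x = ‖x‖ ^ γ) ∧
      (∀ x, opI n s μ v x ≤ C) := by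
  obtain ⟨-, hs1⟩ := hs
  obtain ⟨hγ0, hγs⟩ := hγ
  have hγ2 : γ ≤ 2 := by linarith
  obtain ⟨K, hK0, hK⟩ := exists_secondDiff_barrier_le (EuclideanSpace ℝ (Fin n)) hγ0.le hγ2
  have hmass : μ.real Set.univ ≤ Λ := ENNReal.toReal_le_of_le_ofReal hΛ.le hμΛ
  refine ⟨barrier γ, K * Λ * (∫ r : ℝ, min (|r| ^ 2) (|r| ^ γ) / |r| ^ (1 + 2 * s)) + 1,
    contDiff_barrier γ, by positivity, barrier_eq_zero γ (by simp),
    fun x => ⟨barrier_nonneg γ x, barrier_le γ x⟩, fun x => barrier_eq_of_one_le γ, fun x => ?_⟩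
  have hx : ∃ L : ℝ, ∀ h, |secondDiff (barrier γ) x h| ≤ L * min (‖h‖ ^ 2) (‖h‖ ^ γ) :=
    (exists_abs_secondDiff_barrier_le hγ0.le hγ2 ‖x‖).imp fun _ hL h => hL x h le_rfl
  calc opI n s μ (barrier γ) x
      ≤ K * μ.real Set.univ * ∫ r : ℝ, min (|r| ^ 2) (|r| ^ γ) / |r| ^ (1 + 2 * s) :=
        opI_le_of_secondDiff_le hs1 hγs (contDiff_barrier γ).continuous.measurable hx (hK x)
    _ ≤ K * Λ * (∫ r : ℝ, min (|r| ^ 2) (|r| ^ γ) / |r| ^ (1 + 2 * s)) + 1 := by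
        refine le_add_of_le_of_nonneg ?_ zero_le_one
        gcongr
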